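/- Let A be a C*-algebra and 0 < ε < 1/8. If a ∈ A satisfies ‖a - a²‖ ≤ ε and ‖a - a*‖ ≤ ε, then there exists a projection P ∈ A (i.e., P = P² = P*) such that ‖P - a‖ ≤ 4ε. -/

import Mathlib

theorem aux_y {A : Type*} [NormedRing A] [CompleteSpace A] (a : A)
    (h : ‖a - a ^ 2‖ ≤ 1 / 8) :
    ∃ y : A, ‖y‖ ≤ 147 / 1000 ∧ a * y = y * a ∧ y = (a - a ^ 2) + y * y := by
  set S : Set A := Metric.closedBall 0 (147 / 1000) ∩ {y | a * y = y * a} with hS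
  have hSc : IsClosed S := Metric.isClosed_closedBall.inter
    (isClosed_eq (by fun_prop) (by fun_prop))
  let f : A → A := fun y => (a - a ^ 2) + y * y
  have hf : Set.MapsTo f S S := by
    rintro y ⟨hy, hc⟩
    rw [mem_closedBall_zero_iff] at hy
    have hc' : a * y = y * a := hc
    refine ⟨?_, ?_⟩
    · rw [mem_closedBall_zero_iff]
      have h1 := norm_add_le (a - a ^ 2) (y * y)
      have h2 := norm_mul_le y y
      have h3 := norm_nonneg y
      change ‖(a - a ^ 2) + y * y‖ ≤ _
      nlinarith
    · change a * ((a - a ^ 2) + y * y) = ((a - a ^ 2) + y * y) * a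
      have : a * (y * y) = y * y * a := by
        rw [← mul_assoc, hc', mul_assoc, hc', mul_assoc]
      rw [mul_add, add_mul, this]
      congr 1
      noncomm_ring
  have hcon : ContractingWith (1 / 2) (hf.restrict f S S) := by
    refine ⟨by rw [← NNReal.coe_lt_coe]; norm_num, LipschitzWith.of_dist_le_mul ?_⟩
    rintro ⟨x, hx, _⟩ ⟨y, hy, _⟩
    rw [mem_closedBall_zero_iff] at hx hy
    change dist ((a - a ^ 2) + x * x) ((a - a ^ 2) + y * y) ≤ ((1/2 : NNReal) : ℝ) * dist x y
    rw [dist_eq_norm, dist_eq_norm]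
    have e1 : (a - a ^ 2) + x * x - ((a - a ^ 2) + y * y) = x * (x - y) + (x - y) * y := by
      noncomm_ring
    rw [e1]
    have h1 := norm_add_le (x * (x - y)) ((x - y) * y)
    have h2 := norm_mul_le x (x - y)
    have h3 := norm_mul_le (x - y) y
    have h4 := norm_nonneg (x - y)
    push_cast
    nlinarith
  have h0 : (0 : A) ∈ S := ⟨by simp; norm_num, by simp⟩
  obtain ⟨y, hy, hfy, -⟩ := ContractingWith.exists_fixedPoint' hSc.isComplete hf hcon h0
    (edist_ne_top _ _)
  refine ⟨y, ?_, hy.2, hfy.symm⟩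
  exact mem_closedBall_zero_iff.1 hy.1

theorem aux_inv {A : Type*} [NormedRing A] [CompleteSpace A] (x : A) (h : ‖x‖ < 1) :
    ∃ u : A, (1 - x) * u = 1 ∧ u * (1 - x) = 1 ∧
      ∀ b : A, b * (1 - x) = (1 - x) * b → b * u = u * b := by
  refine ⟨((Units.oneSub x h)⁻¹ : Aˣ), ?_, ?_, ?_⟩
  · exact (Units.oneSub x h).mul_inv
  · exact (Units.oneSub x h).inv_mul
  · intro b hb
    have : Commute b (Units.oneSub x h : A) := hb
    exact this.units_inv_right

theorem aux_e {A : Type*} [NormedRing A] [CompleteSpace A] (a y : A)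
    (hy : ‖y‖ ≤ 147 / 1000) (hc : a * y = y * a) (hq : y = (a - a ^ 2) + y * y) :
    ∃ e : A, e * e = e ∧ e * y = y * e ∧ a = y + e - (y * e + y * e) := by
  obtain ⟨u, hu1, hu2, hu⟩ := aux_inv (y + y) (by have := norm_add_le y y; linarith)
  have hyu : y * u = u * y := hu y (by noncomm_ring)
  have hau : a * u = u * a := hu a (by
    simp only [mul_sub, sub_mul, mul_add, add_mul, hc, mul_one, one_mul])
  have hk : (a - y) * (a - y) = (a - y) * (1 - (y + y)) := by
    have h2 : a ^ 2 = a + y * y - y := by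
      linear_combination (norm := abel) hq
    have h3 : (a - y) * (a - y) = a ^ 2 - a * y - y * a + y * y := by noncomm_ring
    rw [h3, h2, ← hc]; noncomm_ring
  have hdu : (a - y) * u = u * (a - y) := by rw [sub_mul, mul_sub, hau, hyu]
  have hdy : (a - y) * y = y * (a - y) := by rw [sub_mul, mul_sub, hc]
  refine ⟨(a - y) * u, ?_, ?_, ?_⟩
  · calc (a - y) * u * ((a - y) * u) = (a - y) * (u * (a - y)) * u := by noncomm_ring
      _ = ((a - y) * (a - y)) * u * u := by rw [← hdu]; noncomm_ring
      _ = (a - y) * ((1 - (y + y)) * u) * u := by rw [hk]; noncomm_ring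
      _ = _ := by rw [hu1, mul_one]
  · rw [mul_assoc, ← hyu, ← mul_assoc, hdy, mul_assoc]
  · have : (1 - (y + y)) * ((a - y) * u) = a - y := by
      rw [hdu, ← mul_assoc, hu1, one_mul]
    have h2 : (1 - (y + y)) * ((a - y) * u)
      = (a - y) * u - (y * ((a - y) * u) + y * ((a - y) * u)) := by
      rw [sub_mul, one_mul, add_mul]
    rw [h2] at this
    rw [add_sub_assoc, this]; abel

theorem aux_P {A : Type*} [NormedRing A] [StarRing A] [CompleteSpace A] (e : A)
    (he : e * e = e) (hD : ‖e - star e‖ < 1) :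
    ∃ P : A, P * P = P ∧ star P = P ∧ P * (star e * (1 - e)) = P - e := by
  set s := star e with hs
  have hss : s * s = s := by rw [hs, ← star_mul, he]
  obtain ⟨u, hu1, hu2, hu⟩ := aux_inv ((e - s) * (e - s)) (by
    have := norm_mul_le (e - s) (e - s)
    have := norm_nonneg (e - s)
    nlinarith)
  have hz : 1 - (e - s) * (e - s) = 1 - e - s + e * s + s * e := by
    simp only [sub_mul, mul_sub, he, hss]; abel
  rw [hz] at hu1 hu2 hu
  have hez : e * (1 - e - s + e * s + s * e) = e * s * e := by
    simp only [mul_sub, mul_add, mul_one, ← mul_assoc, he]; abel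
  have hze : (1 - e - s + e * s + s * e) * e = e * s * e := by
    simp only [sub_mul, add_mul, one_mul, mul_assoc, he]; abel
  have hsz : s * (1 - e - s + e * s + s * e) = s * e * s := by
    simp only [mul_sub, mul_add, mul_one, ← mul_assoc, hss]; abel
  have hzs : (1 - e - s + e * s + s * e) * s = s * e * s := by
    simp only [sub_mul, add_mul, one_mul, mul_assoc, hss]; abel
  have heu := hu e (hez.trans hze.symm)
  have hsu := hu s (hsz.trans hzs.symm)
  have hstz : star (1 - e - s + e * s + s * e) = 1 - e - s + e * s + s * e := by
    simp only [star_add, star_sub, star_mul, star_one, hs, star_star]; abel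
  have hstu : star u = u := by
    have h1 : star u * (1 - e - s + e * s + s * e) = 1 := by
      rw [← hstz, ← star_mul, hu1, star_one]
    calc star u = star u * ((1 - e - s + e * s + s * e) * u) := by rw [hu1, mul_one]
      _ = u := by rw [← mul_assoc, h1, one_mul]
  have hPe : e * s * u * e = e := by
    rw [mul_assoc, ← heu, ← mul_assoc, ← hez, mul_assoc, hu1, mul_one]
  have hPs : e * s * u * s = e * s * u := by
    rw [mul_assoc, ← hsu, ← mul_assoc, mul_assoc e, hss]
  refine ⟨e * s * u, ?_, ?_, ?_⟩
  · rw [← mul_assoc (e * s * u), ← mul_assoc (e * s * u), hPe]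
  · rw [star_mul, star_mul, hstu, hs, star_star, ← hs, ← mul_assoc, ← heu, mul_assoc, ← hsu,
      mul_assoc]
  · rw [← mul_assoc, hPs, mul_sub, mul_one, hPe]

/-- In a C*-algebra, an ε-approximate projection (for ε < 1/8) is
within 4ε of an actual projection. -/
theorem almost_projection_near_projection
    {A : Type*} [NormedRing A] [StarRing A] [CStarRing A] [CompleteSpace A]
    (ε : ℝ) (hε0 : 0 < ε) (hε : ε < 1 / 8) (a : A)
    (h1 : ‖a - a ^ 2‖ ≤ ε) (h2 : ‖a - star a‖ ≤ ε) :
    ∃ P : A, P ^ 2 = P ∧ star P = P ∧ ‖P - a‖ ≤ 4 * ε := by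
  obtain ⟨y, hy, hay, hq⟩ := aux_y a (h1.trans hε.le)
  obtain ⟨e, he, hey, hae⟩ := aux_e a y hy hay hq
  have hyε : ‖y‖ ≤ 1.1724 * ε := by
    have h3 : ‖y‖ ≤ ‖a - a ^ 2‖ + ‖y‖ * ‖y‖ := by
      calc ‖y‖ = ‖(a - a ^ 2) + y * y‖ := by rw [← hq]
        _ ≤ _ := (norm_add_le _ _).trans (by gcongr; exact norm_mul_le _ _)
    nlinarith [norm_nonneg y]
  set w := star e * (1 - e) with hw
  -- Sylvester equation
  have hsyl : w = w * y + star y * w - star e * (a - star a) * (1 - e) := by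
    have e1 : a * (1 - e) = (1 - e) * y := by
      rw [hae]
      simp only [mul_sub, sub_mul, mul_add, add_mul, mul_one, one_mul, mul_assoc, he, hey]
      abel
    have e2 : star e * star a = star e - star y * star e := by
      have : a * e = e - e * y := by
        rw [hae]
        simp only [sub_mul, add_mul, mul_assoc, he, hey]
        abel
      rw [← star_mul, this, star_sub, star_mul]
    have e3 : star e * (a - star a) * (1 - e) = w * y - (star e - star y * star e) * (1 - e) := by
      rw [← e2, hw, mul_assoc (star e) (1 - e) y, ← e1]; noncomm_ring
    rw [e3, hw]; noncomm_ring
  set n := max ‖e‖ ‖1 - e‖ with hn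
  have hn1 : ‖e‖ ≤ n := le_max_left _ _
  have hn2 : ‖1 - e‖ ≤ n := le_max_right _ _
  have hn0 : 0 ≤ n := (norm_nonneg e).trans hn1
  have hwb : 0.7069 * ‖w‖ ≤ ε * n ^ 2 := by
    have h3 : ‖w‖ ≤ ‖w‖ * ‖y‖ + ‖y‖ * ‖w‖ + n * ε * n := by
      calc ‖w‖ = ‖w * y + star y * w - star e * (a - star a) * (1 - e)‖ := by rw [← hsyl]
        _ ≤ ‖w * y‖ + ‖star y * w‖ + ‖star e * (a - star a) * (1 - e)‖ :=
          (norm_sub_le _ _).trans (by gcongr; exact norm_add_le _ _)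
        _ ≤ _ := by
          gcongr
          · exact norm_mul_le _ _
          · exact (norm_mul_le _ _).trans (by rw [norm_star])
          · refine (norm_mul_le _ _).trans ?_
            gcongr
            refine (norm_mul_le _ _).trans ?_
            rw [norm_star]
            gcongr
    have : ‖y‖ ≤ 0.14655 := by linarith
    nlinarith [norm_nonneg w]
  have hnn : n ^ 2 ≤ n + ‖w‖ := by
    rcases max_choice ‖e‖ ‖1 - e‖ with hm | hm
    · rw [← hn] at hm
      have : star e * e = star e - w := by rw [hw]; noncomm_ring
      have h3 := CStarRing.norm_star_mul_self (x := e)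
      rw [this] at h3
      have h4 := norm_sub_le (star e) w
      rw [norm_star] at h4
      rw [hm]; nlinarith
    · rw [← hn] at hm
      have : star (1 - e) * (1 - e) = (1 - e) - w := by
        rw [hw, star_sub, star_one]; noncomm_ring
      have h3 := CStarRing.norm_star_mul_self (x := 1 - e)
      rw [this] at h3
      have h4 := norm_sub_le (1 - e) w
      rw [hm]; nlinarith
  have hnb : n ≤ 1.2149 := by
    by_contra! hcon
    nlinarith
  have hwε : ‖w‖ ≤ 2.0881 * ε := by
    have : n ^ 2 ≤ 1.47599 := by nlinarith
    nlinarith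
  have hD : ‖e - star e‖ < 1 := by
    have : e - star e = star w - w := by
      rw [hw, star_mul, star_star, star_sub, star_one]; noncomm_ring
    rw [this]
    have h3 := norm_sub_le (star w) w
    rw [norm_star] at h3
    linarith
  obtain ⟨P, hP, hPs, hPw⟩ := aux_P e he hD
  rw [← hw] at hPw
  have hP1 : ‖P‖ ≤ 1 := by
    have h3 := CStarRing.norm_star_mul_self (x := P)
    rw [hPs, hP] at h3
    nlinarith [norm_nonneg P]
  have h11 : ‖(1 : A)‖ ≤ 1 := by
    have h3 := CStarRing.norm_star_mul_self (x := (1 : A))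
    rw [star_one, one_mul] at h3
    nlinarith [norm_nonneg (1 : A)]
  have hsy : ‖1 - (P + P)‖ ≤ 1 := by
    have h3 := CStarRing.norm_star_mul_self (x := 1 - (P + P))
    have h4 : star (1 - (P + P)) * (1 - (P + P)) = 1 := by
      rw [star_sub, star_one, star_add, hPs]
      simp only [mul_sub, sub_mul, mul_add, add_mul, mul_one, one_mul, hP]
      abel
    rw [h4] at h3
    nlinarith [norm_nonneg (1 - (P + P))]
  have hPe : ‖P - e‖ ≤ ‖w‖ := by
    rw [← hPw]
    refine (norm_mul_le _ _).trans ?_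
    nlinarith [norm_nonneg w]
  have hee : ‖1 - (e + e)‖ ≤ 1.522026 := by
    have h3 : 1 - (e + e) = (1 - (P + P)) + ((P - e) + (P - e)) := by abel
    rw [h3]
    have h4 := norm_add_le (1 - (P + P)) ((P - e) + (P - e))
    have h5 := norm_add_le (P - e) (P - e)
    linarith
  refine ⟨P, by rw [pow_two, hP], hPs, ?_⟩
  have h3 : P - a = (P - e) - y * (1 - (e + e)) := by
    nth_rewrite 1 [hae]
    noncomm_ring
  rw [h3]
  have h4 := norm_sub_le (P - e) (y * (1 - (e + e)))
  have h5 := norm_mul_le y (1 - (e + e))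
  have h6 : ‖y‖ * ‖1 - (e + e)‖ ≤ 1.1724 * ε * 1.522026 := by gcongr
  linarith
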